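/- Let f : ℝ → ℝ be continuous on [0,1] and suppose that ∫₀ˣ f(u)/√(x² − u²) du = 0 for every x ∈ [0,1]. Then f(u) = 0 for every u ∈ [0,1]. -/

import Mathlib

open Real intervalIntegral

/-- The antiderivative of the iterated Abel kernel `x / (√(t² − x²) √(x² − u²))`. -/
theorem hasDerivAt_half_arcsin_abel {u t x : ℝ} (hu : 0 ≤ u) (hux : u < x) (hxt : x < t) :
    HasDerivAt (fun x => arcsin ((2 * x ^ 2 - u ^ 2 - t ^ 2) / (t ^ 2 - u ^ 2)) / 2)
      (x / (√(t ^ 2 - x ^ 2) * √(x ^ 2 - u ^ 2))) x := by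
  have h1 : 0 < x ^ 2 - u ^ 2 := by nlinarith
  have h2 : 0 < t ^ 2 - x ^ 2 := by nlinarith
  have h3 : 0 < t ^ 2 - u ^ 2 := by linarith
  have hy : 1 - ((2 * x ^ 2 - u ^ 2 - t ^ 2) / (t ^ 2 - u ^ 2)) ^ 2
      = (2 * (√(t ^ 2 - x ^ 2) * √(x ^ 2 - u ^ 2)) / (t ^ 2 - u ^ 2)) ^ 2 := by
    rw [div_pow, div_pow, mul_pow, mul_pow, sq_sqrt h1.le, sq_sqrt h2.le]
    field_simp
    ring
  have hne1 : (2 * x ^ 2 - u ^ 2 - t ^ 2) / (t ^ 2 - u ^ 2) ≠ -1 := by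
    rw [Ne, div_eq_iff h3.ne']; intro h; linarith
  have hne2 : (2 * x ^ 2 - u ^ 2 - t ^ 2) / (t ^ 2 - u ^ 2) ≠ 1 := by
    rw [Ne, div_eq_iff h3.ne']; intro h; linarith
  have hin : HasDerivAt (fun x : ℝ => (2 * x ^ 2 - u ^ 2 - t ^ 2) / (t ^ 2 - u ^ 2))
      (4 * x / (t ^ 2 - u ^ 2)) x := by
    have := ((((hasDerivAt_pow 2 x).const_mul 2).sub_const (u ^ 2)).sub_const (t ^ 2)).div_const
      (t ^ 2 - u ^ 2)
    refine this.congr_deriv ?_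
    push_cast
    ring
  refine (((hasDerivAt_arcsin hne1 hne2).comp x hin).div_const 2).congr_deriv ?_
  have s1 := sqrt_pos.2 h1
  have s2 := sqrt_pos.2 h2
  rw [hy, sqrt_sq (by positivity)]
  field_simp
  ring

open MeasureTheory Set in
/-- The iterated Abel kernel vanishes for `x ≤ u` by the convention `√y = 0` for `y ≤ 0`, is
integrable, and has total mass `π / 2` independently of `u`. -/
theorem integral_abel_kernel {u t : ℝ} (hu : 0 ≤ u) (hut : u < t) :
    IntegrableOn (fun x => x / (√(t ^ 2 - x ^ 2) * √(x ^ 2 - u ^ 2))) (Ioc 0 t) ∧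
      ∫ x in Ioc 0 t, x / (√(t ^ 2 - x ^ 2) * √(x ^ 2 - u ^ 2)) = π / 2 := by
  have hcont : ContinuousOn
      (fun x => arcsin ((2 * x ^ 2 - u ^ 2 - t ^ 2) / (t ^ 2 - u ^ 2)) / 2) (Icc u t) := by
    fun_prop
  have h3 : t ^ 2 - u ^ 2 ≠ 0 := by nlinarith
  have hint : IntegrableOn (fun x => x / (√(t ^ 2 - x ^ 2) * √(x ^ 2 - u ^ 2))) (Ioc u t) :=
    integrableOn_deriv_of_nonneg hcont
      (fun x hx => hasDerivAt_half_arcsin_abel hu hx.1 hx.2)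
      (fun x hx => div_nonneg (hu.trans hx.1.le) (by positivity))
  have hval := integral_eq_sub_of_hasDerivAt_of_le hut.le hcont
    (fun x hx => hasDerivAt_half_arcsin_abel hu hx.1 hx.2)
    ((intervalIntegrable_iff_integrableOn_Ioc_of_le hut.le).2 hint)
  have hzero : ∀ x ∈ Ioc 0 t \ Ioc u t, x / (√(t ^ 2 - x ^ 2) * √(x ^ 2 - u ^ 2)) = 0 := by
    rintro x ⟨hx, hx'⟩
    have hxu : x ≤ u := by
      by_contra hc
      exact hx' ⟨not_le.1 hc, hx.2⟩
    rw [sqrt_eq_zero_of_nonpos (x := x ^ 2 - u ^ 2) (by nlinarith [hx.1])]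
    simp
  have hsub : Ioc u t ⊆ Ioc 0 t := Ioc_subset_Ioc_left hu
  refine ⟨hint.of_forall_sdiff_eq_zero measurableSet_Ioc hzero, ?_⟩
  rw [setIntegral_eq_of_subset_of_forall_sdiff_eq_zero measurableSet_Ioc hsub hzero,
    ← intervalIntegral.integral_of_le hut.le, hval]
  have e1 : (2 * t ^ 2 - u ^ 2 - t ^ 2) / (t ^ 2 - u ^ 2) = 1 := by
    field_simp; ring
  have e2 : (2 * u ^ 2 - u ^ 2 - t ^ 2) / (t ^ 2 - u ^ 2) = -1 := by
    field_simp; ring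
  rw [e1, e2, arcsin_one, arcsin_neg_one]
  ring

open MeasureTheory Set in
/-- Abel inversion: integrating the Abel transform of `g` against `x / √(t² − x²)` recovers the
primitive of `g`. -/
theorem integral_abel_transform {g : ℝ → ℝ} (hg : Continuous g) {t : ℝ} (ht : 0 ≤ t) :
    ∫ x in (0:ℝ)..t, x / √(t ^ 2 - x ^ 2) * ∫ u in (0:ℝ)..x, g u / √(x ^ 2 - u ^ 2)
      = π / 2 * ∫ u in (0:ℝ)..t, g u := by
  have hae : ∀ᵐ u ∂(volume.restrict (Ioc 0 t)), 0 < u ∧ u < t := by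
    rw [← restrict_Ioo_eq_restrict_Ioc]
    exact ae_restrict_mem measurableSet_Ioo
  have hF : Integrable (Function.uncurry fun x u : ℝ =>
      g u * (x / (√(t ^ 2 - x ^ 2) * √(x ^ 2 - u ^ 2))))
      ((volume.restrict (Ioc 0 t)).prod (volume.restrict (Ioc 0 t))) := by
    have hmeas : Measurable (Function.uncurry fun x u : ℝ =>
        g u * (x / (√(t ^ 2 - x ^ 2) * √(x ^ 2 - u ^ 2)))) := by
      have := hg.measurable
      unfold Function.uncurry
      fun_prop
    refine (integrable_prod_iff' hmeas.aestronglyMeasurable).2 ⟨?_, ?_⟩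
    · filter_upwards [hae] with u hu
      exact (integral_abel_kernel hu.1.le hu.2).1.const_mul (g u)
    · have hi : IntegrableOn (fun u => |g u| * (π / 2)) (Ioc 0 t) :=
        ((hg.abs.mul continuous_const).integrableOn_Icc).mono_set Ioc_subset_Icc_self
      refine Integrable.congr hi ?_
      filter_upwards [hae] with u hu
      rw [← (integral_abel_kernel hu.1.le hu.2).2, ← MeasureTheory.integral_const_mul]
      refine setIntegral_congr_fun measurableSet_Ioc fun x hx => ?_
      have : 0 ≤ x / (√(t ^ 2 - x ^ 2) * √(x ^ 2 - u ^ 2)) :=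
        div_nonneg hx.1.le (by positivity)
      simp only [Function.uncurry, norm_mul, Real.norm_eq_abs, abs_of_nonneg this]
  have hswap := integral_integral_swap hF
  rw [intervalIntegral.integral_of_le ht, intervalIntegral.integral_of_le ht]
  calc _ = ∫ x in Ioc 0 t, ∫ u in Ioc 0 t,
        g u * (x / (√(t ^ 2 - x ^ 2) * √(x ^ 2 - u ^ 2))) := by
        refine setIntegral_congr_fun measurableSet_Ioc fun x hx => ?_
        have hzero : ∀ u ∈ Ioc 0 t \ Ioc 0 x, g u / √(x ^ 2 - u ^ 2) = 0 := by
          rintro u ⟨hu, hu'⟩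
          have hxu : x ≤ u := by
            by_contra hc
            exact hu' ⟨hu.1, (not_le.1 hc).le⟩
          rw [sqrt_eq_zero_of_nonpos (by nlinarith [hx.1]), div_zero]
        rw [intervalIntegral.integral_of_le hx.1.le,
          ← setIntegral_eq_of_subset_of_forall_sdiff_eq_zero measurableSet_Ioc
            (Ioc_subset_Ioc_right hx.2) hzero, ← MeasureTheory.integral_const_mul]
        congr 1 with u
        rw [div_mul_div_comm, mul_div_assoc', mul_comm x]
    _ = ∫ u in Ioc 0 t, ∫ x in Ioc 0 t,
        g u * (x / (√(t ^ 2 - x ^ 2) * √(x ^ 2 - u ^ 2))) := hswap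
    _ = ∫ u in Ioc 0 t, π / 2 * g u := by
        refine integral_congr_ae ?_
        filter_upwards [hae] with u hu
        rw [MeasureTheory.integral_const_mul, (integral_abel_kernel hu.1.le hu.2).2, mul_comm]
    _ = _ := MeasureTheory.integral_const_mul _ _

/-- Injectivity of the Abel-type transform `𝒜f(x) = ∫₀ˣ f(u)/√(x² − u²) du`
on continuous functions on `[0,1]`. -/
theorem abel_transform_injective
    (f : ℝ → ℝ) (hf : ContinuousOn f (Set.Icc 0 1))
    (h : ∀ x ∈ Set.Icc (0 : ℝ) 1,
      ∫ u in (0:ℝ)..x, f u / Real.sqrt (x ^ 2 - u ^ 2) = 0) :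
    ∀ u ∈ Set.Icc (0 : ℝ) 1, f u = 0 := by
  obtain ⟨g, hg, hgf⟩ : ∃ g : ℝ → ℝ, Continuous g ∧ Set.EqOn g f (Set.Icc 0 1) :=
    ⟨Set.IccExtend zero_le_one ((Set.Icc 0 1).domRestrict f),
      (continuousOn_iff_continuous_domRestrict.1 hf).Icc_extend',
      fun x hx => Set.IccExtend_of_mem _ _ hx⟩
  have hA : ∀ x ∈ Set.Icc (0 : ℝ) 1, ∫ u in (0:ℝ)..x, g u / √(x ^ 2 - u ^ 2) = 0 := by
    intro x hx
    refine (intervalIntegral.integral_congr fun u hu => ?_).trans (h x hx)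
    rw [Set.uIcc_of_le hx.1] at hu
    simp only [hgf ⟨hu.1, hu.2.trans hx.2⟩]
  have hprim : ∀ t ∈ Set.Icc (0 : ℝ) 1, ∫ u in (0:ℝ)..t, g u = 0 := by
    intro t ht
    have hz : ∫ x in (0:ℝ)..t, x / √(t ^ 2 - x ^ 2) * ∫ u in (0:ℝ)..x, g u / √(x ^ 2 - u ^ 2)
        = ∫ _x in (0:ℝ)..t, (0 : ℝ) := by
      refine intervalIntegral.integral_congr fun x hx => ?_
      rw [Set.uIcc_of_le ht.1] at hx
      simp only [hA x ⟨hx.1, hx.2.trans ht.2⟩, mul_zero]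
    rw [integral_abel_transform hg ht.1, integral_zero] at hz
    exact (mul_eq_zero.1 hz).resolve_left (by positivity)
  have hIoo : Set.EqOn g 0 (Set.Ioo 0 1) := by
    intro t ht
    have hd : HasDerivAt (fun t => ∫ u in (0:ℝ)..t, g u) (g t) t :=
      hg.integral_hasStrictDerivAt 0 t |>.hasDerivAt
    refine hd.unique ((hasDerivAt_const t (0 : ℝ)).congr_of_eventuallyEq ?_)
    filter_upwards [Ioo_mem_nhds ht.1 ht.2] with s hs
    exact hprim s (Set.Ioo_subset_Icc_self hs)
  intro u hu
  rw [← hgf hu]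
  refine hIoo.closure hg continuous_const ?_
  rwa [closure_Ioo zero_ne_one]
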